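/- Let k > ℓ ≥ 1 be integers, and let G = K_{(k−ℓ,1,…,1)} be the complete (ℓ+1)-partite graph on k vertices with one part of size k−ℓ and ℓ parts of size 1. With c = ℓ+1 colors and any N ≥ ℓ+1, one has θ* ≥ (ℓ!/k^ℓ) · ((k−ℓ)/k)^{k−ℓ} ≥ (ℓ!/e^ℓ) · (1/k^ℓ), where e is the base of the natural logarithm. -/

import Mathlib

open Classical

/-- A proper coloring of the multi-hypergraph `(U, A)`: every edge `S ∈ A` contains
two distinct vertices receiving different colors. -/
def ProperColoring {U κ : Type*} (A : Multiset (Finset U)) (h : U → κ) : Prop :=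
  ∀ S ∈ A, ∃ u ∈ S, ∃ v ∈ S, u ≠ v ∧ h u ≠ h v

/-- For an `N`-coloring `h` of the multi-hypergraph `(U, A)`, the sum over all proper
`c`-colorings `g` of the homomorphic image `h(G)` (a map on the image `h(U) ⊆ [N]`
giving two differently-colored distinct vertices in every image edge `h(S)`)
of `∏_{v ∈ h(U)} p_{g v}`. -/
noncomputable def imageColoringSum {U : Type*} [Fintype U] (A : Multiset (Finset U))
    {N c : ℕ} (p : Fin c → ℝ) (h : U → Fin N) : ℝ :=
  ∑ g : {v : Fin N // v ∈ Finset.image h Finset.univ} → Fin c,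
    if ∀ S ∈ A, ∃ u ∈ S, ∃ v ∈ S,
        g ⟨h u, Finset.mem_image_of_mem h (Finset.mem_univ u)⟩ ≠
        g ⟨h v, Finset.mem_image_of_mem h (Finset.mem_univ v)⟩
    then ∏ v : {v : Fin N // v ∈ Finset.image h Finset.univ}, p (g v)
    else 0

/-- `θ(p)`: the minimum, over proper `N`-colorings `h` of `(U, A)`, of the sum over
proper `c`-colorings `g` of the homomorphic image `h(G)` of `∏_{v ∈ h(U)} p_{g v}`. -/
noncomputable def theta {U : Type*} [Fintype U] (A : Multiset (Finset U))
    (N : ℕ) {c : ℕ} (p : Fin c → ℝ) : ℝ :=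
  sInf {t : ℝ | ∃ h : U → Fin N, ProperColoring A h ∧ imageColoringSum A p h = t}

/-- `P(G, c)`: the number of proper `c`-colorings of the multi-hypergraph `(U, A)`. -/
noncomputable def numProperColorings (U : Type*) [Fintype U] (A : Multiset (Finset U))
    (c : ℕ) : ℕ :=
  Fintype.card {h : U → Fin c // ProperColoring A h}

/-- `θ* = sup` of `θ(p)` over probability vectors `p` with `c` entries. -/
noncomputable def thetaStar {U : Type*} [Fintype U] (A : Multiset (Finset U))
    (N c : ℕ) : ℝ :=
  sSup {t : ℝ | ∃ p : Fin c → ℝ, (∀ i, 0 ≤ p i) ∧ ∑ i, p i = 1 ∧ theta A N p = t}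

/-- The edge multiset of the complete multipartite graph whose parts are the fibers
of `part : U → Fin ℓ`: all pairs `{u, v}` with `u, v` in different parts. -/
noncomputable def multipartiteEdges {U : Type*} [Fintype U] [DecidableEq U] {ℓ : ℕ}
    (part : U → Fin ℓ) : Multiset (Finset U) :=
  (Finset.image (fun e : U × U => ({e.1, e.2} : Finset U))
    ((Finset.univ ×ˢ Finset.univ).filter (fun e : U × U => part e.1 ≠ part e.2))).val

/-!
A proper coloring `h` of a complete multipartite graph only identifies vertices inside a part, so
`h(G)` is complete multipartite with the same number of parts, and distributing the colors
injectively among the parts colors `h(G)` properly. Merging vertices only removes factors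
`p i ≤ 1`, so each such coloring of `h(G)` weighs at least as much as the corresponding coloring
of `G`. Choosing `p i` to be the proportion of vertices in the part `i`, every permutation of the
colors preserving the part sizes contributes the same weight `∏ i, p i ^ |V_i|`. For the star-like
graph there are at least `ℓ!` such permutations, those fixing the large part.
-/

section Inequalities

theorem prod_comp_le_prod_of_surjective {ι κ R : Type*} [Fintype ι] [Fintype κ]
    [CommMonoidWithZero R] [PartialOrder R] [ZeroLEOneClass R] [PosMulMono R]
    {q : ι → κ} (hq : Function.Surjective q) {f : κ → R} (hf : ∀ j, f j ∈ Set.Icc 0 1) :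
    ∏ i, f (q i) ≤ ∏ j, f j := by
  rw [Finset.prod_comp, Finset.image_univ_of_surjective hq]
  refine Finset.prod_le_prod (fun j _ => pow_nonneg (hf j).1 _) fun j _ => ?_
  obtain ⟨i, hi⟩ := hq j
  exact pow_le_of_le_one (hf j).1 (hf j).2 (Finset.card_ne_zero_of_mem (a := i) (by simp [hi]))

theorem exp_neg_le_div_add_pow {n : ℕ} {x : ℝ} (hx : -(n : ℝ) < x) :
    Real.exp (-x) ≤ (n / (n + x)) ^ n := by
  rcases n.eq_zero_or_pos with rfl | hn
  · simpa using hx.le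
  have hn' : (0 : ℝ) < n := Nat.cast_pos.2 hn
  have one_add_eq : 1 + x / n = (n + x) / n := one_add_div hn'.ne'
  have one_add_pow_le : (1 + x / n) ^ n ≤ Real.exp x := by
    simpa [neg_div] using Real.one_sub_div_pow_le_exp_neg (n := n) (t := -x) (by linarith)
  have one_add_pos : 0 < 1 + x / n := one_add_eq ▸ div_pos (by linarith) hn'
  calc Real.exp (-x) = (Real.exp x)⁻¹ := Real.exp_neg x
    _ ≤ ((1 + x / n) ^ n)⁻¹ := inv_anti₀ (pow_pos one_add_pos n) one_add_pow_le
    _ = (n / (n + x)) ^ n := by rw [← inv_pow, one_add_eq, inv_div]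

theorem inv_exp_one_pow_le {k ℓ : ℕ} (hkℓ : ℓ < k) :
    (Real.exp 1 ^ ℓ)⁻¹ ≤ (((k : ℝ) - ℓ) / k) ^ (k - ℓ) := by
  have hlt : -((k - ℓ : ℕ) : ℝ) < ℓ := by
    rw [Nat.cast_sub hkℓ.le, neg_sub, sub_lt_self_iff]
    exact Nat.cast_pos.2 (Nat.zero_lt_of_lt hkℓ)
  simpa [Real.exp_neg, Nat.cast_sub hkℓ.le, ← Real.exp_nat_mul] using
    exp_neg_le_div_add_pow hlt

theorem factorial_le_card_perm_comp_eq {α : Type*} {n : ℕ} {f : Fin (n + 1) → α} {a : α}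
    (hf : ∀ i : Fin n, f i.succ = a) :
    n.factorial ≤ Nat.card {σ : Equiv.Perm (Fin (n + 1)) // f ∘ σ = f} := by
  have comp_decomposeFin_symm_eq (e : Equiv.Perm (Fin n)) :
      f ∘ Equiv.Perm.decomposeFin.symm (0, e) = f := by
    ext i
    cases i using Fin.cases <;> simp [hf]
  calc n.factorial = Nat.card (Equiv.Perm (Fin n)) := by rw [Nat.card_perm, Nat.card_fin]
    _ ≤ _ := Nat.card_le_card_of_injective (fun e => ⟨_, comp_decomposeFin_symm_eq e⟩)
        fun e e' h => by simpa using h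

theorem card_perm_mul_prod_le_sum_embedding {ι κ : Type*} [Fintype ι] [Fintype κ] {p : κ → ℝ}
    (hp : ∀ j, 0 ≤ p j) (q : ι → κ) :
    Nat.card {σ : Equiv.Perm κ // p ∘ σ = p} * ∏ i, p (q i) ≤
      ∑ σ : κ ↪ κ, ∏ i, p (σ (q i)) := by
  have toEmbedding_injective :
      Function.Injective fun σ : {σ : Equiv.Perm κ // p ∘ σ = p} => σ.1.toEmbedding :=
    Equiv.toEmbedding_injective.comp Subtype.val_injective
  have weight_eq (σ : {σ : Equiv.Perm κ // p ∘ σ = p}) :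
      ∏ i, p (σ.1 (q i)) = ∏ i, p (q i) :=
    Finset.prod_congr rfl fun i _ => congrFun σ.2 (q i)
  calc _ = ∑ σ ∈ Finset.univ.map ⟨_, toEmbedding_injective⟩, ∏ i, p (σ (q i)) := by
        simp [weight_eq, Nat.card_eq_fintype_card]
    _ ≤ _ := Finset.sum_le_univ_sum_of_nonneg fun σ => Finset.prod_nonneg fun i _ => hp _

end Inequalities

section MultiHypergraph

variable {U : Type*} [Fintype U] {A : Multiset (Finset U)} {N c : ℕ} {p : Fin c → ℝ}

/-- The vertex set `h(U)` of the homomorphic image `h(G)`, encoded as in `imageColoringSum`. -/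
abbrev ImageVertex (h : U → Fin N) : Type :=
  {v : Fin N // v ∈ Finset.image h Finset.univ}

/-- The quotient map `U → h(U)`: a coloring `g` of `h(G)` is studied through its pullback
`g ∘ toImageVertex h` to `G`. -/
def toImageVertex (h : U → Fin N) (u : U) : ImageVertex h :=
  ⟨h u, Finset.mem_image_of_mem h (Finset.mem_univ u)⟩

theorem toImageVertex_surjective (h : U → Fin N) : Function.Surjective (toImageVertex h) := by
  rintro ⟨v, hv⟩
  obtain ⟨u, -, rfl⟩ := Finset.mem_image.1 hv
  exact ⟨u, rfl⟩

theorem imageColoringSum_eq_sum_filter (A : Multiset (Finset U)) (p : Fin c → ℝ) (h : U → Fin N) :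
    imageColoringSum A p h =
      ∑ g : ImageVertex h → Fin c with ProperColoring A (g ∘ toImageVertex h),
        ∏ v, p (g v) := by
  rw [imageColoringSum, Finset.sum_filter]
  refine Finset.sum_congr rfl fun g _ => if_congr ?_ rfl rfl
  refine forall₂_congr fun S _ => exists_congr fun u => and_congr_right fun _ =>
    exists_congr fun v => and_congr_right fun _ => ?_
  exact ⟨fun hne => ⟨fun huv => hne (by rw [huv]), hne⟩, And.right⟩

theorem imageColoringSum_nonneg (A : Multiset (Finset U)) (hp : ∀ i, 0 ≤ p i) (h : U → Fin N) :
    0 ≤ imageColoringSum A p h := by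
  rw [imageColoringSum_eq_sum_filter]
  exact Finset.sum_nonneg fun g _ => Finset.prod_nonneg fun v _ => hp (g v)

theorem imageColoringSum_le_one (A : Multiset (Finset U)) (hp : p ∈ stdSimplex ℝ (Fin c))
    (h : U → Fin N) : imageColoringSum A p h ≤ 1 := by
  rw [imageColoringSum_eq_sum_filter]
  calc _ ≤ ∑ g : ImageVertex h → Fin c, ∏ v, p (g v) :=
        Finset.sum_le_univ_sum_of_nonneg fun g => Finset.prod_nonneg fun v _ => hp.1 (g v)
    _ = ∏ _v : ImageVertex h, ∑ i, p i := by
        rw [Finset.prod_univ_sum, Fintype.piFinset_univ]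
    _ = 1 := by simp [hp.2]

theorem theta_le_imageColoringSum (hp : ∀ i, 0 ≤ p i) {h : U → Fin N}
    (hh : ProperColoring A h) : theta A N p ≤ imageColoringSum A p h := by
  refine csInf_le ⟨0, ?_⟩ ⟨h, hh, rfl⟩
  rintro _ ⟨h, -, rfl⟩
  exact imageColoringSum_nonneg A hp h

theorem le_theta {t : ℝ} (hA : ∃ h : U → Fin N, ProperColoring A h)
    (ht : ∀ h : U → Fin N, ProperColoring A h → t ≤ imageColoringSum A p h) :
    t ≤ theta A N p := by
  obtain ⟨h₀, hh₀⟩ := hA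
  refine le_csInf ⟨_, h₀, hh₀, rfl⟩ ?_
  rintro _ ⟨h, hh, rfl⟩
  exact ht h hh

theorem theta_le_thetaStar (hA : ∃ h : U → Fin N, ProperColoring A h)
    (hp : p ∈ stdSimplex ℝ (Fin c)) : theta A N p ≤ thetaStar A N c := by
  refine le_csSup ⟨1, ?_⟩ ⟨p, hp.1, hp.2, rfl⟩
  rintro _ ⟨p', hp'_nonneg, hp'_sum, rfl⟩
  obtain ⟨h, hh⟩ := hA
  exact (theta_le_imageColoringSum hp'_nonneg hh).trans
    (imageColoringSum_le_one A ⟨hp'_nonneg, hp'_sum⟩ h)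

end MultiHypergraph

section CompleteMultipartite

variable {U : Type*} [Fintype U] [DecidableEq U] {m N c : ℕ} {part : U → Fin m}

theorem mem_multipartiteEdges {S : Finset U} :
    S ∈ multipartiteEdges part ↔ ∃ u v, part u ≠ part v ∧ {u, v} = S := by
  simp [multipartiteEdges]

theorem properColoring_multipartiteEdges_iff {κ : Type*} {h : U → κ} :
    ProperColoring (multipartiteEdges part) h ↔ ∀ u v, part u ≠ part v → h u ≠ h v := by
  constructor
  · intro hh u v huv
    obtain ⟨x, hx, y, hy, -, hxy⟩ := hh {u, v} (mem_multipartiteEdges.2 ⟨u, v, huv, rfl⟩)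
    simp only [Finset.mem_insert, Finset.mem_singleton] at hx hy
    grind
  · intro hh S hS
    obtain ⟨u, v, huv, rfl⟩ := mem_multipartiteEdges.1 hS
    exact ⟨u, by simp, v, by simp, ne_of_apply_ne part huv, hh u v huv⟩

theorem properColoring_comp_part {κ : Type*} {σ : Fin m → κ} (hσ : Function.Injective σ) :
    ProperColoring (multipartiteEdges part) (σ ∘ part) :=
  properColoring_multipartiteEdges_iff.2 fun _ _ huv => hσ.ne huv

theorem exists_comp_toImageVertex_eq_part {h : U → Fin N}
    (hh : ProperColoring (multipartiteEdges part) h) :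
    ∃ imagePart : ImageVertex h → Fin m, imagePart ∘ toImageVertex h = part := by
  obtain ⟨r, hr⟩ := (toImageVertex_surjective h).hasRightInverse
  refine ⟨part ∘ r, funext fun u => ?_⟩
  by_contra hne
  exact properColoring_multipartiteEdges_iff.1 hh _ _ hne
    (congrArg Subtype.val (hr (toImageVertex h u)))

theorem sum_embedding_prod_le_imageColoringSum {p : Fin c → ℝ} (hp : ∀ i, p i ∈ Set.Icc 0 1)
    (hpart : Function.Surjective part) {h : U → Fin N}
    (hh : ProperColoring (multipartiteEdges part) h) :
    ∑ σ : Fin m ↪ Fin c, ∏ u, p (σ (part u)) ≤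
      imageColoringSum (multipartiteEdges part) p h := by
  obtain ⟨imagePart, rfl⟩ := exists_comp_toImageVertex_eq_part hh
  have comp_injective :
      Function.Injective fun (σ : Fin m ↪ Fin c) (v : ImageVertex h) => σ (imagePart v) :=
    fun _ _ hστ => DFunLike.coe_injective (hpart.of_comp.injective_comp_right hστ)
  rw [imageColoringSum_eq_sum_filter]
  calc ∑ σ : Fin m ↪ Fin c, ∏ u, p (σ (imagePart (toImageVertex h u)))
      ≤ ∑ σ : Fin m ↪ Fin c, ∏ v, p (σ (imagePart v)) :=
        Finset.sum_le_sum fun σ _ => prod_comp_le_prod_of_surjective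
          (toImageVertex_surjective h) fun v => hp (σ (imagePart v))
    _ = ∑ g ∈ Finset.univ.map ⟨_, comp_injective⟩, ∏ v, p (g v) := by
        rw [Finset.sum_map]
        rfl
    _ ≤ _ := by
        refine Finset.sum_le_sum_of_subset_of_nonneg ?_ fun g _ _ =>
          Finset.prod_nonneg fun v _ => (hp (g v)).1
        intro g hg
        obtain ⟨σ, -, rfl⟩ := Finset.mem_map.1 hg
        exact Finset.mem_filter.2 ⟨Finset.mem_univ _, properColoring_comp_part σ.injective⟩

theorem sum_embedding_prod_le_thetaStar {p : Fin c → ℝ} (hp : p ∈ stdSimplex ℝ (Fin c))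
    (hpart : Function.Surjective part) (hN : m ≤ N) :
    ∑ σ : Fin m ↪ Fin c, ∏ u, p (σ (part u)) ≤ thetaStar (multipartiteEdges part) N c := by
  have hproper : ∃ h : U → Fin N, ProperColoring (multipartiteEdges part) h :=
    ⟨_, properColoring_comp_part (Fin.castLE_injective hN)⟩
  exact (le_theta hproper fun h => sum_embedding_prod_le_imageColoringSum
    (mem_Icc_of_mem_stdSimplex hp) hpart).trans (theta_le_thetaStar hproper hp)

theorem card_perm_mul_prod_le_thetaStar {p : Fin m → ℝ} (hp : p ∈ stdSimplex ℝ (Fin m))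
    (hpart : Function.Surjective part) (hN : m ≤ N) :
    Nat.card {σ : Equiv.Perm (Fin m) // p ∘ σ = p} * ∏ u, p (part u) ≤
      thetaStar (multipartiteEdges part) N m :=
  (card_perm_mul_prod_le_sum_embedding hp.1 part).trans
    (sum_embedding_prod_le_thetaStar hp hpart hN)

theorem factorial_mul_prod_le_thetaStar {n : ℕ} {part : U → Fin (n + 1)}
    {p : Fin (n + 1) → ℝ} (hp : p ∈ stdSimplex ℝ (Fin (n + 1))) {b : ℝ}
    (hp_succ : ∀ i : Fin n, p i.succ = b) (hpart : Function.Surjective part) (hN : n + 1 ≤ N) :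
    n.factorial * ∏ u, p (part u) ≤ thetaStar (multipartiteEdges part) N (n + 1) := by
  have hcard : (n.factorial : ℝ) ≤ Nat.card {σ : Equiv.Perm (Fin (n + 1)) // p ∘ σ = p} :=
    Nat.cast_le.2 (factorial_le_card_perm_comp_eq hp_succ)
  exact (mul_le_mul_of_nonneg_right hcard (Finset.prod_nonneg fun u _ => hp.1 (part u))).trans
    (card_perm_mul_prod_le_thetaStar hp hpart hN)

end CompleteMultipartite

section PartDensity

variable {U κ : Type*} [Fintype U] [DecidableEq κ] {part : U → κ}

/-- The proportion of the vertices lying in part `i`, used as the probability of color `i`. The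
parts are the fibers of `part`, as in `multipartiteEdges`. -/
noncomputable def partDensity (part : U → κ) (i : κ) : ℝ :=
  (Finset.univ.filter fun u => part u = i).card / Fintype.card U

theorem partDensity_mem_stdSimplex [Nonempty U] [Fintype κ] (part : U → κ) :
    partDensity part ∈ stdSimplex ℝ κ := by
  refine ⟨fun i => div_nonneg (Nat.cast_nonneg _) (Nat.cast_nonneg _), ?_⟩
  have sum_card_fiber :
      ∑ i, (Finset.univ.filter fun u => part u = i).card = Fintype.card U :=
    (Finset.card_eq_sum_card_fiberwise fun _ _ => Finset.mem_coe.2 (Finset.mem_univ _)).symm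
  simp_rw [partDensity]
  rw [← Finset.sum_div, ← Nat.cast_sum, sum_card_fiber, div_self (by simp)]

theorem surjective_of_card_fiber_ne_zero
    (hpart : ∀ i, (Finset.univ.filter fun u => part u = i).card ≠ 0) :
    Function.Surjective part := by
  intro i
  obtain ⟨u, hu⟩ := Finset.card_ne_zero.1 (hpart i)
  exact ⟨u, (Finset.mem_filter.1 hu).2⟩

end PartDensity

/-- For the complete `(ℓ+1)`-partite graph `K_{(k−ℓ,1,…,1)}` on `k` vertices
(one part of size `k−ℓ`, indexed by `0`, and `ℓ` singleton parts), with `c = ℓ+1`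
colors and any `N ≥ ℓ+1`:
`θ* ≥ (ℓ!/k^ℓ)·((k−ℓ)/k)^{k−ℓ} ≥ (ℓ!/e^ℓ)·(1/k^ℓ)`. -/
theorem thetaStar_star_like_bound
    {U : Type*} [Fintype U] [DecidableEq U]
    (k ℓ : ℕ) (hℓ : 1 ≤ ℓ) (hkℓ : ℓ < k) (hU : Fintype.card U = k)
    (part : U → Fin (ℓ + 1))
    (hpart0 : (Finset.univ.filter (fun u => part u = 0)).card = k - ℓ)
    (hpart1 : ∀ i : Fin (ℓ + 1), i ≠ 0 →
      (Finset.univ.filter (fun u => part u = i)).card = 1)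
    (N : ℕ) (hN : ℓ + 1 ≤ N) :
    ((ℓ.factorial : ℝ) / (k : ℝ) ^ ℓ) * (((k : ℝ) - (ℓ : ℝ)) / (k : ℝ)) ^ (k - ℓ) ≤
      thetaStar (multipartiteEdges part) N (ℓ + 1) ∧
    ((ℓ.factorial : ℝ) / Real.exp 1 ^ ℓ) * (1 / (k : ℝ) ^ ℓ) ≤
      ((ℓ.factorial : ℝ) / (k : ℝ) ^ ℓ) * (((k : ℝ) - (ℓ : ℝ)) / (k : ℝ)) ^ (k - ℓ) := by
  have hpart : Function.Surjective part := surjective_of_card_fiber_ne_zero fun i => by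
    rcases eq_or_ne i 0 with rfl | hi
    · omega
    · rw [hpart1 i hi]; exact one_ne_zero
  have : Nonempty U := ⟨(hpart 0).choose⟩
  have density_zero : partDensity part 0 = (k - ℓ) / k := by
    rw [partDensity, hpart0, hU, Nat.cast_sub hkℓ.le]
  have density_succ (i : Fin ℓ) : partDensity part i.succ = 1 / k := by
    rw [partDensity, hpart1 _ i.succ_ne_zero, hU, Nat.cast_one]
  constructor
  · have weight_eq :
        ∏ u, partDensity part (part u) = (((k : ℝ) - ℓ) / k) ^ (k - ℓ) * (1 / k) ^ ℓ := by
      rw [Finset.prod_comp, Finset.image_univ_of_surjective hpart, Fin.prod_univ_succ]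
      simp [density_zero, density_succ, hpart0, hpart1]
    calc _ = (ℓ.factorial : ℝ) * ∏ u, partDensity part (part u) := by rw [weight_eq]; ring
      _ ≤ _ := factorial_mul_prod_le_thetaStar (partDensity_mem_stdSimplex part)
          density_succ hpart hN
  · calc _ = (ℓ.factorial : ℝ) / (k : ℝ) ^ ℓ * (Real.exp 1 ^ ℓ)⁻¹ := by ring
      _ ≤ _ := mul_le_mul_of_nonneg_left (inv_exp_one_pow_le hkℓ) (by positivity)
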